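/- arXiv:1611.07916 — 5 statements merged into one kernel-verified Lean document; each statement's English description precedes it below -/
import Mathlib

section
/- Let d ≥ 3 and let T be a d-leafed ribbon tree with exactly d − 3 internal edges, i.e. k(T) = d − 3. Then T contains exactly one internal vertex of degree 4, and every other internal vertex of T has degree exactly 3. -/
/-- The degree of a vertex, as the cardinality of its neighbor set. -/
noncomputable def treeDeg {V : Type*} (G : SimpleGraph V) (v : V) : ℕ := (G.neighborSet v).ncard

/-- A vertex is external if it has degree `1`. -/
def ExternalV {V : Type*} (G : SimpleGraph V) (v : V) : Prop := treeDeg G v = 1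

/-- An edge is internal if both of its endpoints are internal (non-external) vertices. -/
def InternalEdge {V : Type*} (G : SimpleGraph V) (e : Sym2 V) : Prop :=
  ∀ v ∈ e, ¬ ExternalV G v

/-- `k(T)`: the number of internal edges. -/
noncomputable def internalEdgeCount {V : Type*} (G : SimpleGraph V) : ℕ :=
  {e : Sym2 V | e ∈ G.edgeSet ∧ InternalEdge G e}.ncard

/-- Let `d ≥ 3` and let `T` be a `d`-leafed ribbon tree with exactly `d - 3` internal
edges, `k(T) = d - 3`.  Then `T` contains exactly one internal vertex of degree `4`, and
every other internal vertex of `T` has degree exactly `3`. -/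
theorem ribbonTree_codimOne_unique_fourValent {V : Type*} [Fintype V]
    (G : SimpleGraph V) (hG : G.IsTree) (d : ℕ) (hd : 3 ≤ d)
    (ext : Fin (d + 1) → V) (hinj : Function.Injective ext)
    (hext : ∀ i, ExternalV G (ext i))
    (hsurj : ∀ v, ExternalV G v → ∃ i, v = ext i)
    (hint : ∀ v, ¬ ExternalV G v → 3 ≤ treeDeg G v)
    (hk : internalEdgeCount G = d - 3) :
    ∃ v₀ : V, (¬ ExternalV G v₀ ∧ treeDeg G v₀ = 4) ∧
      ∀ v : V, ¬ ExternalV G v → v ≠ v₀ → treeDeg G v = 3 := by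
  classical
  have hdeg : ∀ v, treeDeg G v = G.degree v := by
    intro v
    rw [treeDeg, Set.ncard_eq_toFinset_card', ← SimpleGraph.card_neighborFinset_eq_degree]
    rfl
  have hcardE := hG.card_edgeFinset
  have hsum := G.sum_degrees_eq_twice_card_edges
  set E : Finset V := Finset.univ.filter (fun v => ExternalV G v) with hE
  set I : Finset V := Finset.univ.filter (fun v => ¬ ExternalV G v) with hI
  have hEcard : E.card = d + 1 := by
    have : E = Finset.univ.image ext := by
      ext v
      simp only [hE, Finset.mem_filter, Finset.mem_univ, true_and, Finset.mem_image]
      constructor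
      · intro h
        obtain ⟨i, hi⟩ := hsurj v h
        exact ⟨i, hi.symm⟩
      · rintro ⟨i, rfl⟩
        exact hext i
    rw [this, Finset.card_image_of_injective _ hinj]
    simp
  have hVI : E.card + I.card = Fintype.card V := by
    rw [hE, hI, Finset.card_filter_add_card_filter_not]
    rfl
  have hsplit : ∑ v ∈ E, G.degree v + ∑ v ∈ I, G.degree v = ∑ v, G.degree v :=
    Finset.sum_filter_add_sum_filter_not _ _ _
  have hsE : ∑ v ∈ E, G.degree v = E.card := by
    rw [Finset.card_eq_sum_ones]
    refine Finset.sum_congr rfl fun v hv => ?_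
    rw [← hdeg]
    exact (Finset.mem_filter.1 hv).2
  have hnb : ∀ v, ∃ n, ExternalV G v → G.neighborSet v = {n} := by
    intro v
    by_cases h : ExternalV G v
    · obtain ⟨n, hn⟩ := Set.ncard_eq_one.1 h
      exact ⟨n, fun _ => hn⟩
    · exact ⟨v, fun h' => absurd h' h⟩
  choose n hn using hnb
  have hadj : ∀ v, ExternalV G v → ∀ w, G.Adj v w ↔ w = n v := by
    intro v hv w
    rw [← SimpleGraph.mem_neighborSet, hn v hv, Set.mem_singleton_iff]
  have hinjE : Set.InjOn (fun v => s(v, n v)) (E : Set V) := by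
    intro v hv w hw h
    have hv : ExternalV G v := (Finset.mem_filter.1 hv).2
    have hw : ExternalV G w := (Finset.mem_filter.1 hw).2
    simp only [Sym2.eq_iff] at h
    rcases h with h | ⟨h1, h2⟩
    · exact h.1
    exfalso
    have key : ∀ a b, G.Walk a b → (a = v ∨ a = w) → (b = v ∨ b = w) := by
      intro a b p
      induction p with
      | nil => exact id
      | cons hab _ ih =>
        intro ha
        apply ih
        rcases ha with rfl | rfl
        · right; rw [(hadj _ hv _).1 hab, h2]
        · left; rw [(hadj _ hw _).1 hab, h1]
    have hall : (Finset.univ : Finset V) ⊆ {v, w} := by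
      intro b _
      obtain ⟨p⟩ := hG.connected.preconnected v b
      simpa using key v b p (Or.inl rfl)
    have := Finset.card_le_card hall
    have h2 : ({v, w} : Finset V).card ≤ 2 := Finset.card_le_two
    rw [Finset.card_univ] at this
    omega
  have himg : E.image (fun v => s(v, n v)) = G.edgeFinset.filter (fun e => ¬ InternalEdge G e) := by
    ext e
    rw [Finset.mem_filter]
    simp only [Finset.mem_image, Finset.mem_filter, SimpleGraph.mem_edgeFinset, hE,
      Finset.mem_univ, true_and, InternalEdge]
    constructor
    · rintro ⟨v, hv, rfl⟩
      exact ⟨(hadj v hv _).2 rfl, fun h => h v (Sym2.mem_mk_left _ _) hv⟩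
    · rintro ⟨he, h⟩
      push Not at h
      obtain ⟨v, hve, hv⟩ := h
      obtain ⟨w, rfl⟩ := Sym2.mem_iff_exists.1 hve
      exact ⟨v, hv, by rw [(hadj v hv w).1 he]⟩
  have hext_card := Finset.card_image_of_injOn hinjE
  rw [himg] at hext_card
  have hint_card : (G.edgeFinset.filter (fun e => InternalEdge G e)).card = d - 3 := by
    rw [← hk, internalEdgeCount, ← Set.ncard_coe_finset]
    congr 1
    ext e
    simp
  have hedges := Finset.card_filter_add_card_filter_not (s := G.edgeFinset)
    (fun e => InternalEdge G e)
  have hge : ∀ v ∈ I, 3 ≤ G.degree v := by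
    intro v hv
    rw [← hdeg]
    exact hint v (Finset.mem_filter.1 hv).2
  have hIcard : I.card = d - 2 := by omega
  have hsI : ∑ v ∈ I, G.degree v = 3 * I.card + 1 := by omega
  have hex : ∃ v ∈ I, 3 < G.degree v := by
    by_contra! h
    have := Finset.sum_le_card_nsmul I (fun v => G.degree v) 3 h
    simp only [smul_eq_mul] at this
    omega
  obtain ⟨v₀, hv₀, h4⟩ := hex
  have hers := Finset.add_sum_erase I (fun v => G.degree v) hv₀
  have hce := Finset.card_erase_add_one hv₀
  have hlow : ∀ v ∈ I.erase v₀, 3 ≤ G.degree v := fun v hv => hge v (Finset.mem_of_mem_erase hv)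
  have h3 := Finset.card_nsmul_le_sum (I.erase v₀) (fun v => G.degree v) 3 hlow
  simp only [smul_eq_mul] at h3 hers
  refine ⟨v₀, ⟨(Finset.mem_filter.1 hv₀).2, ?_⟩, ?_⟩
  · rw [hdeg]; omega
  · intro v hv hne
    have hvI : v ∈ I.erase v₀ := Finset.mem_erase.2 ⟨hne, Finset.mem_filter.2 ⟨Finset.mem_univ _, hv⟩⟩
    have hers2 := Finset.add_sum_erase (I.erase v₀) (fun v => G.degree v) hvI
    have hce2 := Finset.card_erase_add_one hvI
    have h32 := Finset.card_nsmul_le_sum ((I.erase v₀).erase v) (fun v => G.degree v) 3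
      fun u hu => hlow u (Finset.mem_of_mem_erase hu)
    simp only [smul_eq_mul] at h32 hers2
    have := hlow v hvI
    rw [hdeg]; omega
end

section
/- Let d ≥ 2 and let T be a d-leafed ribbon tree. Then v_in(e_0(T)) = v_0, and for every edge e of T with e ≠ e_0(T) the incoming vertex v_in(e) is an internal vertex of T. Consequently the number of edges of T whose incoming vertex is internal equals k(T) + d. -/
/-- `Incoming G r u w` says that `{u, w}` is an edge of `G` whose incoming vertex
(relative to the root `r`) is `u` and whose outgoing vertex is `w`: `u` and `w` are
adjacent and `u` lies on the unique path in `G` from `r` to `w`. -/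
def Incoming {V : Type*} (G : SimpleGraph V) (r u w : V) : Prop :=
  G.Adj u w ∧ ∀ p : G.Walk r w, p.IsPath → u ∈ p.support


theorem aux_ext_unique {V : Type*} {G : SimpleGraph V} {u a b : V} (hu : ExternalV G u)
    (ha : G.Adj u a) (hb : G.Adj u b) : a = b := by
  obtain ⟨c, hc⟩ := Set.ncard_eq_one.1 hu
  have h1 : a ∈ G.neighborSet u := ha
  have h2 : b ∈ G.neighborSet u := hb
  rw [hc] at h1 h2
  exact h1.trans h2.symm

theorem aux_mid {V : Type*} {G : SimpleGraph V} {r u w : V} (p : G.Walk r w) (hp : p.IsPath)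
    (hu : u ∈ p.support) (hur : u ≠ r) (huw : u ≠ w) : ¬ ExternalV G u := by
  classical
  intro he
  have h1 : ¬ (p.takeUntil u hu).Nil := fun h => hur h.eq.symm
  have h2 : ¬ (p.dropUntil u hu).Nil := fun h => huw h.eq
  have h3 := aux_ext_unique he ((p.takeUntil u hu).adj_penultimate h1).symm
    ((p.dropUntil u hu).adj_snd h2)
  have h4 := List.mem_of_mem_dropLast (SimpleGraph.Walk.penultimate_mem_dropLast_support h1)
  have h5 : (p.dropUntil u hu).snd ∈ (p.dropUntil u hu).support.tail :=
    SimpleGraph.Walk.snd_mem_tail_support h2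
  have h6 := hp.support_nodup
  rw [← p.take_spec hu, SimpleGraph.Walk.support_append, List.nodup_append] at h6
  exact h6.2.2 _ h4 _ h5 h3

theorem aux_incoming {V : Type*} {G : SimpleGraph V} (hG : G.IsTree) {r u w : V}
    (h : G.Adj u w) (p : G.Walk r w) (hp : p.IsPath) (hu : u ∈ p.support) :
    Incoming G r u w := by
  refine ⟨h, fun q hq => ?_⟩
  have := hG.isAcyclic.path_unique ⟨p, hp⟩ ⟨q, hq⟩
  have h2 : p = q := congrArg Subtype.val this
  exact h2 ▸ hu

theorem aux_or {V : Type*} {G : SimpleGraph V} (hG : G.IsTree) (r : V) {a b : V}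
    (h : G.Adj a b) : Incoming G r a b ∨ Incoming G r b a := by
  obtain ⟨p, hp⟩ := (hG.connected.preconnected r b).exists_isPath
  by_cases ha : a ∈ p.support
  · exact Or.inl (aux_incoming hG h p hp ha)
  · refine Or.inr (aux_incoming hG h.symm (p.concat h.symm) (hp.concat ha h.symm) ?_)
    simp [SimpleGraph.Walk.support_concat]

theorem aux_ne {V : Type*} {G : SimpleGraph V} {r u w : V} (h : Incoming G r u w) : w ≠ r := by
  rintro rfl
  have := h.2 SimpleGraph.Walk.nil SimpleGraph.Walk.IsPath.nil
  simp at this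
  exact h.1.ne this

/-- Let `d ≥ 2` and let `T` be a `d`-leafed ribbon tree with root `v_0 = ext 0`.
Then `v_in(e_0(T)) = v_0` (the incoming vertex of the rooted edge is the root), for every
edge `e ≠ e_0(T)` (i.e. not containing the root) the incoming vertex `v_in(e)` is an
internal vertex of `T`, and consequently the number of edges of `T` whose incoming
vertex is internal equals `k(T) + d`. -/
theorem ribbonTree_incoming_internal {V : Type*} [Fintype V]
    (G : SimpleGraph V) (hG : G.IsTree) (d : ℕ) (hd : 2 ≤ d)
    (ext : Fin (d + 1) → V) (hinj : Function.Injective ext)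
    (hext : ∀ i, ExternalV G (ext i))
    (hsurj : ∀ v, ExternalV G v → ∃ i, v = ext i)
    (hint : ∀ v, ¬ ExternalV G v → 3 ≤ treeDeg G v) :
    (∀ w : V, G.Adj (ext 0) w → Incoming G (ext 0) (ext 0) w) ∧
    (∀ u w : V, Incoming G (ext 0) u w → u ≠ ext 0 → w ≠ ext 0 → ¬ ExternalV G u) ∧
    {e : Sym2 V | e ∈ G.edgeSet ∧
        ∃ u w : V, e = s(u, w) ∧ Incoming G (ext 0) u w ∧ ¬ ExternalV G u}.ncard
      = internalEdgeCount G + d := by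
  have part2 : ∀ u w : V, Incoming G (ext 0) u w → u ≠ ext 0 → ¬ ExternalV G u := by
    intro u w h hu
    obtain ⟨p, hp⟩ := (hG.connected.preconnected (ext 0) w).exists_isPath
    exact aux_mid p hp (h.2 p hp) hu h.1.ne
  refine ⟨fun w h => ⟨h, fun p _ => p.start_mem_support⟩, fun u w h hu _ => part2 u w h hu, ?_⟩
  have hn : ∀ i : Fin d, ∃ n, G.Adj n (ext i.succ) ∧ Incoming G (ext 0) n (ext i.succ) ∧
      ¬ ExternalV G n := by
    intro i
    have hne : ext 0 ≠ ext i.succ := fun h => (Fin.succ_ne_zero i) (hinj h).symm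
    obtain ⟨p, hp⟩ := (hG.connected.preconnected (ext 0) (ext i.succ)).exists_isPath
    have hnil : ¬ p.Nil := fun h => hne h.eq
    have hadj := p.adj_penultimate hnil
    have hinc := aux_incoming hG hadj p hp (List.mem_of_mem_dropLast (SimpleGraph.Walk.penultimate_mem_dropLast_support hnil))
    refine ⟨p.penultimate, hadj, hinc, part2 _ _ hinc ?_⟩
    intro h0
    rw [h0] at hadj
    obtain ⟨j, hj⟩ : ∃ j : Fin d, j ≠ i := by
      have : Nontrivial (Fin d) := Fin.nontrivial_iff_two_le.2 hd
      exact exists_ne i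
    have hne' : ext 0 ≠ ext j.succ := fun h => (Fin.succ_ne_zero j) (hinj h).symm
    obtain ⟨q, hq⟩ := (hG.connected.preconnected (ext 0) (ext j.succ)).exists_isPath
    have hqn : ¬ q.Nil := fun h => hne' h.eq
    have hs := aux_ext_unique (hext 0) (q.adj_snd hqn) hadj
    have hm : ext i.succ ∈ q.support := hs ▸ List.mem_of_mem_tail (SimpleGraph.Walk.snd_mem_tail_support hqn)
    exact aux_mid q hq hm hne.symm (fun h => hj (Fin.succ_injective _ (hinj h)).symm) (hext _)
  choose n hadj hinc hnint using hn
  have hset : {e : Sym2 V | e ∈ G.edgeSet ∧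
        ∃ u w : V, e = s(u, w) ∧ Incoming G (ext 0) u w ∧ ¬ ExternalV G u} =
      {e : Sym2 V | e ∈ G.edgeSet ∧ InternalEdge G e} ∪
        Set.range (fun i : Fin d => s(n i, ext i.succ)) := by
    ext e
    constructor
    · rintro ⟨he, u, w, rfl, hi, hu⟩
      by_cases hw : ExternalV G w
      · right
        obtain ⟨i, rfl⟩ := hsurj w hw
        have hi0 : i ≠ 0 := fun h => aux_ne hi (congrArg ext h)
        obtain ⟨j, rfl⟩ := Fin.exists_succ_eq.2 hi0
        refine ⟨j, ?_⟩
        have := aux_ext_unique hw (hadj j).symm hi.1.symm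
        simp [this]
      · left
        refine ⟨he, ?_⟩
        intro v hv
        rcases Sym2.mem_iff.1 hv with rfl | rfl <;> assumption
    · rintro (⟨he, hi⟩ | ⟨i, rfl⟩)
      · refine ⟨he, ?_⟩
        induction e using Sym2.ind with
        | _ a b =>
          rcases aux_or hG (ext 0) (G.mem_edgeSet.1 he) with h | h
          · exact ⟨a, b, rfl, h, hi a (Sym2.mem_mk_left a b)⟩
          · exact ⟨b, a, Sym2.eq_swap, h, hi b (Sym2.mem_mk_right a b)⟩
      · exact ⟨G.mem_edgeSet.2 (hadj i), _, _, rfl, hinc i, hnint i⟩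
  have hfinj : Function.Injective (fun i : Fin d => s(n i, ext i.succ)) := by
    intro i j h
    rcases Sym2.eq_iff.1 h with h | h
    · exact Fin.succ_injective _ (hinj h.2)
    · exact absurd (h.1 ▸ hext _) (hnint i)
  rw [hset, Set.ncard_union_eq ?_ (Set.toFinite _) (Set.toFinite _)]
  · rw [← Set.image_univ, Set.ncard_image_of_injective _ hfinj, Set.ncard_univ, Nat.card_fin]
    rfl
  · rw [Set.disjoint_left]
    rintro _ ⟨_, h⟩ ⟨i, rfl⟩
    exact h _ (Sym2.mem_mk_right _ _) (hext _)
end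

section
/- Let d ≥ 1, let i and l be natural numbers with 1 ≤ i ≤ d and 0 ≤ l ≤ d − i, and let μ_0, μ_1, …, μ_d and y be integers satisfying y = (Σ_{q=i}^{i+l} μ_q) + 1 − l. Then σ(μ_0, μ_1, …, μ_d) + σ(μ_0, μ_1, …, μ_{i−1}, y, μ_{i+l+1}, …, μ_d) + σ(y, μ_i, …, μ_{i+l}) ≡ (n+1)·(l·♣_1^{i−1} + d·l + d + l + i) (mod 2). -/
/-- For `m ≥ 1` and integers `a_0, a_1, …, a_m` (given as `a : ℕ → ℤ`), the sign
exponent `σ(a_0, …, a_m) := (n+1) · (a_0 + ∑_{j=1}^m (m+1-j) · a_j)` twisting the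
oriented intersection numbers in the definition of the A∞-operation coefficients. -/
def sigmaA (n : ℤ) (m : ℕ) (a : ℕ → ℤ) : ℤ :=
  (n + 1) * (a 0 + ∑ j ∈ Finset.Icc 1 m, ((m : ℤ) + 1 - (j : ℤ)) * a j)

theorem sum_Icc_shift (m : ℕ) (f : ℕ → ℤ) :
    ∑ j ∈ Finset.Icc 1 m, f j = ∑ k ∈ Finset.range m, f (k + 1) := by
  induction m with
  | zero => simp
  | succ m ih => rw [Finset.sum_Icc_succ_top (by omega), ih, Finset.sum_range_succ]

theorem sum_Icc_shift' (a l : ℕ) (f : ℕ → ℤ) :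
    ∑ j ∈ Finset.Icc a (a + l), f j = ∑ k ∈ Finset.range (l + 1), f (a + k) := by
  induction l with
  | zero => simp
  | succ m ih => rw [← add_assoc, Finset.sum_Icc_succ_top (by omega), ih,
      Finset.sum_range_succ _ (m + 1), add_assoc]

theorem sum_lin (m : ℕ) (a : ℤ) (f : ℕ → ℤ) :
    ∑ k ∈ Finset.range m, (a - (k : ℤ)) * f k
      = a * ∑ k ∈ Finset.range m, f k - ∑ k ∈ Finset.range m, (k : ℤ) * f k := by
  rw [Finset.mul_sum, ← Finset.sum_sub_distrib]
  exact Finset.sum_congr rfl fun k _ => by ring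

/-- Let `d ≥ 1`, `1 ≤ i ≤ d`, `0 ≤ l ≤ d - i`, and let `μ_0, …, μ_d` and `y` be integers
with `y = (∑_{q=i}^{i+l} μ_q) + 1 - l`.  Then
`σ(μ_0, …, μ_d) + σ(μ_0, …, μ_{i-1}, y, μ_{i+l+1}, …, μ_d) + σ(y, μ_i, …, μ_{i+l})
  ≡ (n+1) · (l · ♣_1^{i-1} + d·l + d + l + i) (mod 2)`,
where `♣_1^{i-1} = ∑_{q=1}^{i-1} (μ_q - 1)`. -/
theorem sigma_computation_internal (n : ℤ) (d i l : ℕ)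
    (hd : 1 ≤ d) (hi : 1 ≤ i) (hid : i ≤ d) (hil : i + l ≤ d)
    (μ : ℕ → ℤ) (y : ℤ)
    (hy : y = (∑ q ∈ Finset.Icc i (i + l), μ q) + 1 - (l : ℤ)) :
    Int.ModEq 2
      (sigmaA n d μ
        + sigmaA n (d - l) (fun q => if q < i then μ q else if q = i then y else μ (q + l))
        + sigmaA n (l + 1) (fun q => if q = 0 then y else μ (q + i - 1)))
      ((n + 1) * ((l : ℤ) * (∑ q ∈ Finset.Icc 1 (i - 1), (μ q - 1))
        + (d : ℤ) * (l : ℤ) + (d : ℤ) + (l : ℤ) + (i : ℤ))) := by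
  obtain ⟨p, rfl⟩ : ∃ p, i = p + 1 := ⟨i - 1, by omega⟩
  obtain ⟨c, rfl⟩ : ∃ c, d = p + (l + 1) + c := ⟨d - (p + (l + 1)), by omega⟩
  have e1 : p + (l + 1) + c - l = p + 1 + c := by omega
  rw [e1]
  rw [sum_Icc_shift'] at hy
  unfold sigmaA
  simp only [sum_Icc_shift, Nat.add_sub_cancel]
  rw [Finset.sum_range_add _ (p + (l + 1)) c, Finset.sum_range_add _ p (l + 1),
    Finset.sum_range_add _ (p + 1) c, Finset.sum_range_succ _ p]
  have hA := sum_lin p ((p : ℤ) + (l + 1) + c) (fun k => μ (k + 1))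
  have hA' := sum_lin p ((p : ℤ) + 1 + c) (fun k => μ (k + 1))
  have hB := sum_lin (l + 1) ((l : ℤ) + 1 + c) (fun k => μ (p + 1 + k))
  have hB' := sum_lin (l + 1) ((l : ℤ) + 1) (fun k => μ (p + 1 + k))
  have t1 : ∑ k ∈ Finset.range p, (((p + (l + 1) + c : ℕ) : ℤ) + 1 - ((k + 1 : ℕ) : ℤ)) * μ (k + 1)
      = ∑ k ∈ Finset.range p, (((p : ℤ) + (l + 1) + c) - (k : ℤ)) * μ (k + 1) :=
    Finset.sum_congr rfl fun k _ => by push_cast; ring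
  have t2 : ∑ k ∈ Finset.range (l + 1),
        (((p + (l + 1) + c : ℕ) : ℤ) + 1 - ((p + k + 1 : ℕ) : ℤ)) * μ (p + k + 1)
      = ∑ k ∈ Finset.range (l + 1), (((l : ℤ) + 1 + c) - (k : ℤ)) * μ (p + 1 + k) :=
    Finset.sum_congr rfl fun k _ => by
      rw [show p + k + 1 = p + 1 + k by ring]; push_cast; ring
  have t3 : ∑ k ∈ Finset.range p, (((p + 1 + c : ℕ) : ℤ) + 1 - ((k + 1 : ℕ) : ℤ)) *
        (if k + 1 < p + 1 then μ (k + 1) else if k + 1 = p + 1 then y else μ (k + 1 + l))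
      = ∑ k ∈ Finset.range p, (((p : ℤ) + 1 + c) - (k : ℤ)) * μ (k + 1) :=
    Finset.sum_congr rfl fun k hk => by
      rw [if_pos (by have := Finset.mem_range.1 hk; omega)]; push_cast; ring
  have t4 : ∑ k ∈ Finset.range c, (((p + 1 + c : ℕ) : ℤ) + 1 - ((p + 1 + k + 1 : ℕ) : ℤ)) *
        (if p + 1 + k + 1 < p + 1 then μ (p + 1 + k + 1)
          else if p + 1 + k + 1 = p + 1 then y else μ (p + 1 + k + 1 + l))
      = ∑ k ∈ Finset.range c, (((p + (l + 1) + c : ℕ) : ℤ) + 1 -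
          ((p + (l + 1) + k + 1 : ℕ) : ℤ)) * μ (p + (l + 1) + k + 1) :=
    Finset.sum_congr rfl fun k hk => by
      rw [if_neg (by omega), if_neg (by omega),
        show p + 1 + k + 1 + l = p + (l + 1) + k + 1 by ring]; push_cast; ring
  have t5 : ∑ k ∈ Finset.range (l + 1), (((l + 1 : ℕ) : ℤ) + 1 - ((k + 1 : ℕ) : ℤ)) *
        (if k + 1 = 0 then y else μ (k + 1 + (p + 1) - 1))
      = ∑ k ∈ Finset.range (l + 1), (((l : ℤ) + 1) - (k : ℤ)) * μ (p + 1 + k) :=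
    Finset.sum_congr rfl fun k hk => by
      rw [if_neg (by omega), show k + 1 + (p + 1) - 1 = p + 1 + k by omega]; push_cast; ring
  rw [t1, t2, t3, t4, t5, hA, hA', hB, hB']
  rw [if_pos (by omega : 0 < p + 1), if_neg (by omega : ¬ p + 1 < p + 1), if_pos rfl, if_pos trivial]
  rw [Finset.sum_sub_distrib]
  simp only [Finset.sum_const, Finset.card_range, nsmul_eq_mul, mul_one]
  generalize (∑ k ∈ Finset.range c, (((p + (l + 1) + c : ℕ) : ℤ) + 1 -
          ((p + (l + 1) + k + 1 : ℕ) : ℤ)) * μ (p + (l + 1) + k + 1)) = C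
  generalize (∑ k ∈ Finset.range (l + 1), (k : ℤ) * μ (p + 1 + k)) = B1
  generalize (∑ k ∈ Finset.range p, (k : ℤ) * μ (k + 1)) = A1
  generalize (∑ k ∈ Finset.range p, μ (k + 1)) = A0
  generalize (∑ k ∈ Finset.range (l + 1), μ (p + 1 + k)) = B0 at hy ⊢
  obtain rfl : B0 = y - 1 + l := by linarith
  push_cast
  apply Int.ModEq.symm
  rw [Int.modEq_iff_dvd]
  obtain ⟨w, hw⟩ : (2 : ℤ) ∣ (l : ℤ) ^ 2 - 3 * l := by
    rcases Int.even_or_odd' (l : ℤ) with ⟨t, h | h⟩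
    · exact ⟨2 * t ^ 2 - 3 * t, by rw [h]; ring⟩
    · exact ⟨2 * t ^ 2 - t - 1, by rw [h]; ring⟩
  refine ⟨(n + 1) * (μ 0 + (p + 1 + c) * A0 - A1 - B1 + C + (l + 2 + c) * y - 2 - c - p + w), ?_⟩
  linear_combination (n + 1) * hw
end

section
/- Let d ≥ 3, i ≥ 1 and l ≥ 1 be natural numbers with i + l ≤ d − 1. The assignment τ_L(1) = i+l−1; τ_L(1+j) = j for 1 ≤ j ≤ i−1; τ_L(i+j) = i+l−1+j for 1 ≤ j ≤ d−i−l−1; and τ_L(d−l−1+j) = i−1+j for 1 ≤ j ≤ l−1, defines a permutation of the set {1, 2, …, d−2}, and the sign of this permutation equals (−1)^{(d−i)·l + d − 1}. -/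
def tauF (a b c x : ℕ) : ℕ :=
  if x = 0 then a + b else if x ≤ a then x - 1 else if x ≤ a + c then x + b else x - c - 1

theorem tauF_lt (a b c x : ℕ) (h : x < 1 + a + c + b) : tauF a b c x < 1 + a + c + b := by
  unfold tauF; split_ifs <;> omega

theorem tauF_inj (a b c x y : ℕ) (hx : x < 1 + a + c + b) (hy : y < 1 + a + c + b)
    (h : tauF a b c x = tauF a b c y) : x = y := by
  unfold tauF at h; split_ifs at h <;> omega

theorem tau_inner (a b c y : ℕ) (hy : y < 1 + a + c + b) :
    (∏ x ∈ Finset.range y, if tauF a b c x < tauF a b c y then (1 : ℤˣ) else -1)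
      = if y = 0 then 1 else if y ≤ a then -1 else if y ≤ a + c then 1 else (-1) ^ (c + 1) := by
  have key : ((Finset.range y).filter (fun x => ¬ tauF a b c x < tauF a b c y)) =
      if y = 0 then ∅ else if y ≤ a then {0} else if y ≤ a + c then ∅
        else insert 0 (Finset.Ioc a (a + c)) := by
    ext x
    unfold tauF
    split_ifs <;> simp <;> split_ifs <;> omega
  rw [Finset.prod_ite, Finset.prod_const_one, one_mul, Finset.prod_const, key]
  split_ifs <;> simp

theorem tau_outer (a b c : ℕ) :
    (∏ y ∈ Finset.range (1 + a + c + b), (if y = 0 then (1 : ℤˣ) else if y ≤ a then -1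
      else if y ≤ a + c then 1 else (-1) ^ (c + 1))) = (-1) ^ (a + (c + 1) * b) := by
  rw [Finset.prod_range_add, Finset.prod_range_add, Finset.prod_range_add]
  have h1 : ∀ x ∈ Finset.range a, (if 1 + x = 0 then (1 : ℤˣ) else if 1 + x ≤ a then -1
      else if 1 + x ≤ a + c then 1 else (-1) ^ (c + 1)) = -1 := by
    intro x hx
    rw [Finset.mem_range] at hx
    rw [if_neg (by omega), if_pos (by omega)]
  have h2 : ∀ x ∈ Finset.range c, (if 1 + a + x = 0 then (1 : ℤˣ) else if 1 + a + x ≤ a then -1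
      else if 1 + a + x ≤ a + c then 1 else (-1) ^ (c + 1)) = 1 := by
    intro x hx
    rw [Finset.mem_range] at hx
    rw [if_neg (by omega), if_neg (by omega), if_pos (by omega)]
  have h3 : ∀ x ∈ Finset.range b, (if 1 + a + c + x = 0 then (1 : ℤˣ)
      else if 1 + a + c + x ≤ a then -1
      else if 1 + a + c + x ≤ a + c then 1 else (-1) ^ (c + 1)) = (-1) ^ (c + 1) := by
    intro x hx
    rw [if_neg (by omega), if_neg (by omega), if_neg (by omega)]
  rw [Finset.prod_congr rfl h1, Finset.prod_congr rfl h2, Finset.prod_congr rfl h3]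
  simp [pow_add, pow_mul]

theorem tau_exists (a b c n : ℕ) (hn : n = 1 + a + c + b) :
    ∃ τ : Equiv.Perm (Fin n), (∀ x, (τ x : ℕ) = tauF a b c x) ∧
      Equiv.Perm.sign τ = (-1) ^ (a + (c + 1) * b) := by
  subst hn
  let f : Fin (1 + a + c + b) → Fin (1 + a + c + b) :=
    fun x => ⟨tauF a b c x, tauF_lt a b c x x.2⟩
  have hf : Function.Injective f := by
    intro x y h
    exact Fin.ext (tauF_inj a b c x y x.2 y.2 (congrArg Fin.val h))
  let τ := Equiv.ofBijective f (Finite.injective_iff_bijective.mp hf)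
  have hτ : ∀ x, (τ x : ℕ) = tauF a b c x := fun x => rfl
  refine ⟨τ, hτ, ?_⟩
  rw [Equiv.Perm.sign_eq_prod_prod_Iio, ← tau_outer, ← Fin.prod_univ_eq_prod_range
    (fun y => if y = 0 then (1 : ℤˣ) else if y ≤ a then -1
      else if y ≤ a + c then 1 else (-1) ^ (c + 1))]
  refine Finset.prod_congr rfl fun y _ => ?_
  rw [← tau_inner a b c y y.2]
  have : Finset.range (y : ℕ) = (Finset.Iio y).map Fin.valEmbedding := by
    rw [Fin.map_valEmbedding_Iio]; ext; simp
  rw [this, Finset.prod_map]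
  refine Finset.prod_congr rfl fun x _ => ?_
  simp only [Fin.lt_def, hτ, Fin.valEmbedding_apply]


/-- Let `d ≥ 3`, `i ≥ 1`, `l ≥ 1` with `i + l ≤ d - 1`.  The assignment (in 1-based
indexing of `{1, …, d-2}`, an element `x : Fin (d-2)` representing the number
`(x : ℕ) + 1`):
`τ_L(1) = i+l-1`; `τ_L(1+j) = j` for `1 ≤ j ≤ i-1`; `τ_L(i+j) = i+l-1+j` for
`1 ≤ j ≤ d-i-l-1`; and `τ_L(d-l-1+j) = i-1+j` for `1 ≤ j ≤ l-1`,
defines a permutation of `{1, …, d-2}`, whose sign equals `(-1)^{(d-i)·l + d - 1}`.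
(This is the order-preserving bijection `τ_e` for a left-handed internal edge `e`
of type `(i,l)` of a `d`-leafed binary ribbon tree.) -/
theorem sign_tau_left (d i l : ℕ) (hd : 3 ≤ d) (hi : 1 ≤ i) (hl : 1 ≤ l)
    (hil : i + l ≤ d - 1) :
    ∃ τ : Equiv.Perm (Fin (d - 2)),
      (∀ x : Fin (d - 2), (x : ℕ) + 1 = 1 → ((τ x : ℕ) + 1 = i + l - 1)) ∧
      (∀ x : Fin (d - 2), ∀ j : ℕ, 1 ≤ j → j ≤ i - 1 →
        (x : ℕ) + 1 = 1 + j → (τ x : ℕ) + 1 = j) ∧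
      (∀ x : Fin (d - 2), ∀ j : ℕ, 1 ≤ j → j ≤ d - i - l - 1 →
        (x : ℕ) + 1 = i + j → (τ x : ℕ) + 1 = i + l - 1 + j) ∧
      (∀ x : Fin (d - 2), ∀ j : ℕ, 1 ≤ j → j ≤ l - 1 →
        (x : ℕ) + 1 = d - l - 1 + j → (τ x : ℕ) + 1 = i - 1 + j) ∧
      Equiv.Perm.sign τ = (-1) ^ ((d - i) * l + d - 1) := by
  obtain ⟨τ, h, hs⟩ := tau_exists (i - 1) (l - 1) (d - i - l - 1) (d - 2) (by omega)
  refine ⟨τ, ?_, ?_, ?_, ?_, ?_⟩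
  · intro x hx
    rw [h]; unfold tauF; split_ifs <;> omega
  · intro x j _ _ hx
    rw [h]; unfold tauF; split_ifs <;> omega
  · intro x j _ _ hx
    rw [h]; unfold tauF; split_ifs <;> omega
  · intro x j _ _ hx
    rw [h]; unfold tauF; split_ifs <;> omega
  · rw [hs]
    obtain ⟨a, rfl⟩ := Nat.exists_eq_add_of_le' hi
    obtain ⟨b, rfl⟩ := Nat.exists_eq_add_of_le' hl
    obtain ⟨c, rfl⟩ : ∃ c, d = a + b + c + 3 := ⟨d - (a + b + 3), by omega⟩
    have e1 : a + b + c + 3 - (a + 1) - (b + 1) - 1 = c := by omega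
    have e2 : a + b + c + 3 - (a + 1) = b + c + 2 := by omega
    rw [e1, e2, Nat.add_sub_cancel, Nat.add_sub_cancel]
    have e3 : (b + c + 2) * (b + 1) + (a + b + c + 3) - 1
        = (a + (c + 1) * b) + (b * (b + 1) + 2 * (b + c + 2)) := by
      have : (b + c + 2) * (b + 1) + (a + b + c + 3)
        = (a + (c + 1) * b) + (b * (b + 1) + 2 * (b + c + 2)) + 1 := by ring
      omega
    have e4 : Even (b * (b + 1) + 2 * (b + c + 2)) :=
      (Nat.even_mul_succ_self b).add (even_two_mul _)
    rw [e3, pow_add _ (a + (c + 1) * b), e4.neg_one_pow, mul_one]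
end

section
/- Let d ≥ 3, i ≥ 2 and l ≥ 1 be natural numbers with i + l ≤ d. The assignment τ_R(1) = i−1; τ_R(1+j) = j for 1 ≤ j ≤ i−2; τ_R(i−1+j) = i+l−2+j for 1 ≤ j ≤ d−i−l; and τ_R(d−l−1+j) = i−1+j for 1 ≤ j ≤ l−1, defines a permutation of the set {1, 2, …, d−2}, and the sign of this permutation equals (−1)^{(d−i)·l + d}. -/
theorem rot_val (n c : ℕ) (x : Fin n) : (((finRotate n) ^ c) x : ℕ) = (x + c) % n := by
  induction c with
  | zero => simp [Nat.mod_eq_of_lt x.2]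
  | succ c ih =>
    rw [pow_succ', Equiv.Perm.mul_apply]
    obtain _ | m := n
    · exact x.elim0
    · rw [finRotate_apply, Fin.val_add, ih, Fin.coe_ofNat_eq_mod]
      simp [Nat.add_assoc]

theorem rot_inv_val (a : ℕ) (x : Fin (a + 1)) :
    (((finRotate (a + 1))⁻¹ x : Fin (a + 1)) : ℕ) = if (x : ℕ) = 0 then a else x - 1 := by
  have key : (finRotate (a + 1))⁻¹ x =
      ⟨if (x : ℕ) = 0 then a else x - 1, by have := x.2; split_ifs <;> omega⟩ := by
    rw [Equiv.Perm.inv_eq_iff_eq]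
    have h := rot_val (a + 1) 1
      ⟨if (x : ℕ) = 0 then a else x - 1, by have := x.2; split_ifs <;> omega⟩
    rw [pow_one] at h
    apply Fin.ext
    rw [h]
    have := x.2
    by_cases h0 : (x : ℕ) = 0
    · simp [h0]
    · simp only [h0, if_false]
      rw [Nat.mod_eq_of_lt] <;> omega
  rw [key]

theorem sign_rot (b c : ℕ) :
    Equiv.Perm.sign ((finRotate (b + c)) ^ c) = (-1) ^ (b * c) := by
  rw [map_pow]
  obtain _ | c := c
  · simp
  · rw [← Nat.add_assoc, sign_finRotate, ← pow_mul, neg_one_pow_congr]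
    have h := Nat.even_mul_succ_self c
    have e : (b + c) * (c + 1) = b * (c + 1) + c * (c + 1) := by ring
    rw [Nat.add_sub_cancel, e, Nat.even_add]
    simp [h]

/-- Let `d ≥ 3`, `i ≥ 2`, `l ≥ 1` with `i + l ≤ d`.  The assignment (in 1-based
indexing of `{1, …, d-2}`, an element `x : Fin (d-2)` representing the number
`(x : ℕ) + 1`):
`τ_R(1) = i-1`; `τ_R(1+j) = j` for `1 ≤ j ≤ i-2`; `τ_R(i-1+j) = i+l-2+j` for
`1 ≤ j ≤ d-i-l`; and `τ_R(d-l-1+j) = i-1+j` for `1 ≤ j ≤ l-1`,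
defines a permutation of `{1, …, d-2}`, whose sign equals `(-1)^{(d-i)·l + d}`.
(This is the order-preserving bijection `τ_e` for a right-handed internal edge `e`
of type `(i,l)` of a `d`-leafed binary ribbon tree.) -/
theorem sign_tau_right (d i l : ℕ) (hd : 3 ≤ d) (hi : 2 ≤ i) (hl : 1 ≤ l)
    (hil : i + l ≤ d) :
    ∃ τ : Equiv.Perm (Fin (d - 2)),
      (∀ x : Fin (d - 2), (x : ℕ) + 1 = 1 → ((τ x : ℕ) + 1 = i - 1)) ∧
      (∀ x : Fin (d - 2), ∀ j : ℕ, 1 ≤ j → j ≤ i - 2 →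
        (x : ℕ) + 1 = 1 + j → (τ x : ℕ) + 1 = j) ∧
      (∀ x : Fin (d - 2), ∀ j : ℕ, 1 ≤ j → j ≤ d - i - l →
        (x : ℕ) + 1 = i - 1 + j → (τ x : ℕ) + 1 = i + l - 2 + j) ∧
      (∀ x : Fin (d - 2), ∀ j : ℕ, 1 ≤ j → j ≤ l - 1 →
        (x : ℕ) + 1 = d - l - 1 + j → (τ x : ℕ) + 1 = i - 1 + j) ∧
      Equiv.Perm.sign τ = (-1) ^ ((d - i) * l + d) := by
  obtain ⟨a, rfl⟩ := Nat.exists_eq_add_of_le' hi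
  obtain ⟨c, rfl⟩ := Nat.exists_eq_add_of_le' hl
  obtain ⟨b, rfl⟩ := Nat.exists_eq_add_of_le' hil
  have hn : (a + 1) + (b + c) = b + (a + 2 + (c + 1)) - 2 := by omega
  let e : Fin (a + 1) ⊕ Fin (b + c) ≃ Fin (b + (a + 2 + (c + 1)) - 2) :=
    finSumFinEquiv.trans (finCongr hn)
  let σ : Equiv.Perm (Fin (a + 1) ⊕ Fin (b + c)) :=
    Equiv.Perm.sumCongr (finRotate (a + 1))⁻¹ ((finRotate (b + c)) ^ c)
  have h1 : ∀ x : Fin (b + (a + 2 + (c + 1)) - 2), (x : ℕ) ≤ a →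
      (e.permCongr σ x : ℕ) = if (x : ℕ) = 0 then a else x - 1 := by
    intro x hx
    have hx' : x = e (Sum.inl ⟨x, by omega⟩) := by
      apply Fin.ext; simp [e]
    rw [Equiv.permCongr_apply]
    conv_lhs => rw [hx']
    rw [Equiv.symm_apply_apply]
    simp [e, σ, -Equiv.Perm.coe_inv, rot_inv_val]
  have h2 : ∀ x : Fin (b + (a + 2 + (c + 1)) - 2), a < (x : ℕ) →
      (e.permCongr σ x : ℕ) = a + 1 + ((x - (a + 1)) + c) % (b + c) := by
    intro x hx
    have hx' : x = e (Sum.inr ⟨x - (a + 1), by omega⟩) := by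
      apply Fin.ext; simp [e]; omega
    rw [Equiv.permCongr_apply]
    conv_lhs => rw [hx']
    rw [Equiv.symm_apply_apply]
    simp [e, σ, rot_val]
  refine ⟨e.permCongr σ, ?_, ?_, ?_, ?_, ?_⟩
  · intro x hx
    rw [h1 x (by omega), if_pos (by omega)]; omega
  · intro x j hj hj' hx
    rw [h1 x (by omega), if_neg (by omega)]; omega
  · intro x j hj hj' hx
    rw [h2 x (by omega), Nat.mod_eq_of_lt (by omega)]; omega
  · intro x j hj hj' hx
    rw [h2 x (by omega), Nat.mod_eq_sub_mod (by omega), Nat.mod_eq_of_lt (by omega)]; omega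
  · rw [Equiv.Perm.sign_permCongr, Equiv.Perm.sign_sumCongr, Equiv.Perm.sign_inv,
      sign_finRotate, sign_rot, ← pow_add, neg_one_pow_congr]
    have e1 : b + (a + 2 + (c + 1)) - (a + 2) = b + (c + 1) := by omega
    have e2 : (b + (c + 1)) * (c + 1) + (b + (a + 2 + (c + 1)))
        = (a + b * c) + (c * (c + 1) + 2 * (b + c + 2)) := by ring
    rw [e1, e2, Nat.even_add (m := a + b * c), Nat.even_add (m := c * (c + 1))]
    simp [Nat.even_mul_succ_self c]
end
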